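/- Let k ≥ 2, ω = exp(2πi/k), and let d_0, ..., d_{k-1} be positive natural numbers with n = Σ d_i. Let u ∈ M_n(ℂ) be the block-diagonal unitary acting as ω^i on a chosen subspace V_i of dimension d_i (the V_i forming an orthogonal direct sum decomposition of ℂ^n). Set d + 1 = ⌈(max_i d_i)/(min_i d_i)⌉. Then there exist normal matrices x_0, ..., x_d ∈ M_n(ℂ) such that every eigenvalue of each x_j is either 0 or a k-th root of unity, u x_j u^* = ω x_j for all j, and Σ_{j=0}^d x_j x_j^* is invertible. -/

import Mathlib

open Matrix in
/-- An orthonormal system adapted to the eigenspaces of the unitary `u`. -/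
theorem exists_adapted_unitary (k n : ℕ) (c : Fin k → ℂ) (hc : Function.Injective c)
    (hc1 : ∀ i, star (c i) * c i = 1)
    (d : Fin k → ℕ) (u : Matrix (Fin n) (Fin n) ℂ) (hu : uᴴ * u = 1)
    (heig : ∀ i : Fin k, Module.finrank ℂ
        (LinearMap.ker (Matrix.toLin' (u - c i • (1 : Matrix (Fin n) (Fin n) ℂ)))) = d i) :
    ∃ U : Matrix (Fin n) (Σ i : Fin k, Fin (d i)) ℂ, Uᴴ * U = 1 ∧
      u * U = U * diagonal (fun p => c p.1) := by
  let E : Fin k → Submodule ℂ (EuclideanSpace ℂ (Fin n)) := fun i =>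
    (LinearMap.ker (Matrix.toLin' (u - c i • (1 : Matrix (Fin n) (Fin n) ℂ)))).map
      ((WithLp.linearEquiv 2 ℂ (Fin n → ℂ)).symm : (Fin n → ℂ) →ₗ[ℂ] EuclideanSpace ℂ (Fin n))
  have hE : ∀ i, Module.finrank ℂ (E i) = d i := by
    intro i
    rw [← heig i]
    exact LinearEquiv.finrank_map_eq _ _
  let b : ∀ i, OrthonormalBasis (Fin (d i)) ℂ (E i) := fun i =>
    (stdOrthonormalBasis ℂ (E i)).reindex (finCongr (hE i))
  let w : (Σ i : Fin k, Fin (d i)) → (Fin n → ℂ) := fun p =>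
    WithLp.ofLp ((b p.1 p.2 : E p.1) : EuclideanSpace ℂ (Fin n))
  have hw : ∀ p, u *ᵥ w p = c p.1 • w p := by
    intro p
    obtain ⟨y, hy, hy2⟩ := (Submodule.mem_map).1 (b p.1 p.2).2
    have : w p = y := by
      simp only [w]
      rw [← hy2]
      rfl
    rw [this]
    have h3 : (u - c p.1 • (1 : Matrix (Fin n) (Fin n) ℂ)) *ᵥ y = 0 := by
      rw [LinearMap.mem_ker, toLin'_apply] at hy
      exact hy
    rw [sub_mulVec, smul_mulVec, one_mulVec, sub_eq_zero] at h3
    exact h3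
  have horth : ∀ p q, star (w p) ⬝ᵥ w q = if p = q then 1 else 0 := by
    rintro ⟨i, a⟩ ⟨j, a'⟩
    by_cases hij : i = j
    · subst hij
      have h := (orthonormal_iff_ite.1 (b i).orthonormal) a a'
      rw [Submodule.coe_inner, EuclideanSpace.inner_eq_star_dotProduct] at h
      rw [dotProduct_comm]
      simp only [w]
      rw [h]
      simp
    · have h1 : star (u *ᵥ w ⟨i, a⟩) ⬝ᵥ (u *ᵥ w ⟨j, a'⟩) = star (w ⟨i, a⟩) ⬝ᵥ w ⟨j, a'⟩ := by
        rw [star_mulVec, ← dotProduct_mulVec, mulVec_mulVec, hu, one_mulVec]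
      rw [hw, hw, star_smul, smul_dotProduct, dotProduct_smul, smul_smul] at h1
      have hne : star (c i) * c j ≠ 1 := by
        intro h
        apply hij
        apply hc
        have h0 : star (c i) ≠ 0 := by
          intro h0
          have := hc1 i
          rw [h0, zero_mul] at this
          exact zero_ne_one this
        exact mul_left_cancel₀ h0 ((hc1 i).trans h.symm)
      have h2 : (star (c i) * c j - 1) * (star (w ⟨i, a⟩) ⬝ᵥ w ⟨j, a'⟩) = 0 := by
        rw [sub_mul, one_mul, sub_eq_zero]
        simpa using h1
      rcases mul_eq_zero.1 h2 with h | h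
      · exact absurd (sub_eq_zero.1 h) hne
      · rw [h, if_neg]
        intro h
        exact hij (congrArg Sigma.fst h)
  refine ⟨Matrix.of fun s p => w p s, ?_, ?_⟩
  · ext p q
    rw [one_apply, ← horth p q]
    rfl
  · ext s p
    refine Eq.trans ?_ (mul_diagonal _ _ _ _).symm
    have := congrFun (hw p) s
    simp only [Pi.smul_apply, smul_eq_mul] at this
    rw [of_apply, mul_comm, ← this]
    rfl

open Matrix in
theorem spectrum_of_pow_eq {n k : ℕ} (hn : 0 < n) (x : Matrix (Fin n) (Fin n) ℂ)
    (hx : x ^ (k + 1) = x) : spectrum ℂ x ⊆ {z : ℂ | z = 0 ∨ z ^ k = 1} := by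
  intro z hz
  have : Nonempty (Fin n) := ⟨⟨0, hn⟩⟩
  have h := spectrum.subset_polynomial_aeval x (Polynomial.X ^ (k + 1) - Polynomial.X : Polynomial ℂ)
    ⟨z, hz, rfl⟩
  simp only [map_sub, map_pow, Polynomial.aeval_X, hx, sub_self, spectrum.zero_eq,
    Polynomial.eval_sub, Polynomial.eval_pow, Polynomial.eval_X, Set.mem_singleton_iff] at h
  have h2 : z * (z ^ k - 1) = 0 := by rw [← h]; ring
  rcases mul_eq_zero.1 h2 with h | h
  · exact Or.inl h
  · exact Or.inr (sub_eq_zero.1 h)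

open Matrix in
theorem conj_pow_aux {α β : Type*} [Fintype α] [DecidableEq α] [Fintype β] [DecidableEq β]
    (Y : Matrix α β ℂ) (hY : Yᴴ * Y = 1) (S : Matrix β β ℂ) (l : ℕ) :
    (Y * S * Yᴴ) ^ (l + 1) = Y * S ^ (l + 1) * Yᴴ := by
  induction l with
  | zero => simp
  | succ l ih =>
    rw [pow_succ, ih, pow_succ S (l + 1)]
    calc Y * S ^ (l + 1) * Yᴴ * (Y * S * Yᴴ)
        = Y * S ^ (l + 1) * (Yᴴ * Y) * S * Yᴴ := by simp only [Matrix.mul_assoc]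
      _ = _ := by rw [hY, Matrix.mul_one]; simp only [Matrix.mul_assoc]

/-- The cyclic shift. -/
def cycShift (k m : ℕ) [NeZero k] : Equiv.Perm (Fin k × Fin m) :=
  (Equiv.addRight (-1 : Fin k)).prodCongr (Equiv.refl _)

theorem cycShift_pow (k m : ℕ) [NeZero k] : cycShift k m ^ k = 1 := by
  have h : ∀ l : ℕ, ∀ p, (cycShift k m ^ l) p = (p.1 + l • (-1 : Fin k), p.2) := by
    intro l
    induction l with
    | zero => intro p; simp
    | succ l ih =>
      intro p
      rw [pow_succ, Equiv.Perm.mul_apply, ih]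
      simp [cycShift, add_smul, add_assoc, add_comm]
  ext1 p
  rw [h]
  have h2 : k • (-1 : Fin k) = 0 := by
    have := card_nsmul_eq_zero (x := (-1 : Fin k))
    simpa only [Fintype.card_fin, Nat.card_eq_fintype_card] using this
  rw [h2]
  simp

open Matrix in
theorem permMatrix_pow_aux {β : Type*} [Fintype β] [DecidableEq β] (σ : Equiv.Perm β) (l : ℕ) :
    (σ.permMatrix ℂ) ^ l = (σ ^ l).permMatrix ℂ := by
  induction l with
  | zero => simp
  | succ l ih => rw [pow_succ', ih, pow_succ, ← permMatrix_mul]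

/-- The embedding of the `j`-th block. -/
def blockEmb {k : ℕ} (m : ℕ) (d : Fin k → ℕ) (hm : ∀ i, m ≤ d i) (j : ℕ) :
    Fin k × Fin m → Σ i : Fin k, Fin (d i) :=
  fun p => ⟨p.1, ⟨min (j * m) (d p.1 - m) + p.2, by
    have := hm p.1
    have := p.2.2
    omega⟩⟩

theorem blockEmb_injective {k : ℕ} (m : ℕ) (d : Fin k → ℕ) (hm : ∀ i, m ≤ d i) (j : ℕ) :
    Function.Injective (blockEmb m d hm j) := by
  rintro ⟨i, a⟩ ⟨i', a'⟩ h
  have h1 : i = i' := congrArg Sigma.fst h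
  subst h1
  have h2 := eq_of_heq (Sigma.mk.inj_iff.1 h).2
  have h3 := congrArg Fin.val h2
  simp only at h3
  have : a = a' := Fin.ext (by omega)
  rw [this]

theorem blockEmb_cover {k : ℕ} (m M : ℕ) (hm0 : 0 < m) (d : Fin k → ℕ) (hm : ∀ i, m ≤ d i)
    (hM : ∀ i, d i ≤ M) (p : Σ i : Fin k, Fin (d i)) :
    ∃ j : Fin ((M + m - 1) / m), ∃ q, blockEmb m d hm j q = p := by
  obtain ⟨i, a⟩ := p
  have ha := a.2
  have h1 := hM i
  have h2 := hm i
  have h3 := Nat.div_add_mod a.1 m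
  have h4 := Nat.mod_lt a.1 hm0
  have h5 : a.1 / m * m = m * (a.1 / m) := Nat.mul_comm _ _
  have hj : a.1 / m < (M + m - 1) / m := by
    rw [Nat.lt_iff_add_one_le, Nat.le_div_iff_mul_le hm0, Nat.add_mul]
    omega
  refine ⟨⟨a.1 / m, hj⟩, (i, ⟨a.1 - min (a.1 / m * m) (d i - m), by omega⟩), ?_⟩
  unfold blockEmb
  congr 1
  apply Fin.ext
  simp only
  omega

open Matrix in
open scoped ComplexOrder in
theorem sum_dotProduct_aux {ι β : Type*} [Fintype ι] [Fintype β] (v : ι → β → ℂ)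
    (h : ∑ j, star (v j) ⬝ᵥ v j = 0) (j : ι) : v j = 0 := by
  have h3 := (Finset.sum_eq_zero_iff_of_nonneg
      (fun j _ => dotProduct_star_self_nonneg (v j))).1 h
  exact dotProduct_star_self_eq_zero.1 (h3 j (Finset.mem_univ _))

open Matrix in

theorem exists_normal_witnesses_weak_dim
    (k : ℕ) (hk : 2 ≤ k) (ω : ℂ)
    (hω : ω = Complex.exp (2 * Real.pi * Complex.I / k))
    (d : Fin k → ℕ) (hd : ∀ i, 1 ≤ d i) (n : ℕ) (hn : n = ∑ i, d i)
    (u : Matrix (Fin n) (Fin n) ℂ) (hu : star u * u = 1) (huk : u ^ k = 1)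
    (heig : ∀ i : Fin k,
      Module.finrank ℂ
        (LinearMap.ker (Matrix.toLin' (u - ω ^ (i : ℕ) • (1 : Matrix (Fin n) (Fin n) ℂ)))) = d i)
    (M m : ℕ) (hM : ∀ i, d i ≤ M) (hM' : ∃ i, d i = M)
    (hm : ∀ i, m ≤ d i) (hm' : ∃ i, d i = m) :
    ∃ x : Fin ((M + m - 1) / m) → Matrix (Fin n) (Fin n) ℂ,
      (∀ j, x j * star (x j) = star (x j) * x j) ∧
      (∀ j, spectrum ℂ (x j) ⊆ {z : ℂ | z = 0 ∨ z ^ k = 1}) ∧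
      (∀ j, u * x j * star u = ω • x j) ∧
      IsUnit (∑ j, x j * star (x j)) := by
  classical
  have : NeZero k := ⟨by omega⟩
  have hprim : IsPrimitiveRoot ω k := by
    rw [hω]; exact Complex.isPrimitiveRoot_exp k (by omega)
  have hωk : ω ^ k = 1 := hprim.pow_eq_one
  have hnorm : ‖ω‖ = 1 := hprim.norm'_eq_one (by omega)
  have hωs : star ω * ω = 1 := by
    have := Complex.conj_mul' ω
    rw [hnorm] at this
    simpa using this
  have hm0 : 0 < m := by
    obtain ⟨i, hi⟩ := hm'
    have := hd i
    omega
  have hn0 : 0 < n := by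
    have h := Finset.single_le_sum (f := d) (fun i _ => Nat.zero_le _) (Finset.mem_univ (0 : Fin k))
    have := hd 0
    omega
  let c : Fin k → ℂ := fun i => ω ^ (i : ℕ)
  have hcinj : Function.Injective c := fun i j h => Fin.ext (hprim.pow_inj i.2 j.2 h)
  have hc1 : ∀ i, star (c i) * c i = 1 := by
    intro i
    simp only [c]
    rw [star_pow, ← mul_pow, hωs, one_pow]
  have hcs : ∀ i, c (i + 1) = ω * c i := by
    intro i
    simp only [c]
    rw [Fin.val_add, ← pow_eq_pow_mod _ hωk, Fin.val_one', pow_add, ← pow_eq_pow_mod _ hωk, pow_one,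
      mul_comm]
  rw [star_eq_conjTranspose] at hu
  obtain ⟨U, hU, huU⟩ := exists_adapted_unitary k n c hcinj hc1 d u hu heig
  have hcard : Fintype.card (Fin n) = Fintype.card (Σ i : Fin k, Fin (d i)) := by
    simp [hn]
  have hU' : U * Uᴴ = 1 := (mul_eq_one_comm_of_equiv (Fintype.equivOfCardEq hcard)).2 hU
  let e := fun j : Fin ((M + m - 1) / m) => blockEmb m d hm (j : ℕ)
  have he : ∀ j, Function.Injective (e j) := fun j => blockEmb_injective m d hm j
  let Y := fun j => U.submatrix id (e j)
  have hY : ∀ j, (Y j)ᴴ * Y j = 1 := by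
    intro j
    have h : (Y j)ᴴ * Y j = (Uᴴ * U).submatrix (e j) (e j) := rfl
    rw [h, hU, submatrix_one _ (he j)]
  let S : Matrix (Fin k × Fin m) (Fin k × Fin m) ℂ := (cycShift k m).permMatrix ℂ
  have hS1 : S * Sᴴ = 1 := by
    simp only [S]
    rw [conjTranspose_permMatrix, ← permMatrix_mul, inv_mul_cancel, permMatrix_one]
  have hS2 : Sᴴ * S = 1 := by
    simp only [S]
    rw [conjTranspose_permMatrix, ← permMatrix_mul, mul_inv_cancel, permMatrix_one]
  have hSk : S ^ k = 1 := by
    simp only [S]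
    rw [permMatrix_pow_aux, cycShift_pow, permMatrix_one]
  let D : Matrix (Fin k × Fin m) (Fin k × Fin m) ℂ := diagonal (fun p => c p.1)
  have huY : ∀ j, u * Y j = Y j * D := by
    intro j
    ext s p
    have h := congrFun (congrFun huU s) (e j p)
    replace h := h.trans (mul_diagonal _ _ _ _)
    simp only [D]
    rw [mul_diagonal]
    exact h
  have hDS : D * S * Dᴴ = ω • S := by
    ext p q
    simp only [D, S]
    rw [diagonal_conjTranspose, mul_diagonal, diagonal_mul, Matrix.smul_apply]
    rw [Equiv.Perm.permMatrix, PEquiv.toMatrix_apply]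
    by_cases h : q ∈ (cycShift k m).toPEquiv p
    · rw [if_pos h]
      have h2 : p.1 = q.1 + 1 := by
        have h3 : cycShift k m p = q := by
          simpa [Equiv.toPEquiv_apply] using h
        rw [← h3]
        simp [cycShift]
      rw [h2, hcs]
      have := hc1 q.1
      simp only [Pi.star_apply, smul_eq_mul, mul_one]
      rw [mul_assoc, mul_comm (c q.1), this, mul_one]
    · rw [if_neg h]; simp
  have hxx : ∀ j, (Y j * S * (Y j)ᴴ) * (Y j * S * (Y j)ᴴ)ᴴ = Y j * (Y j)ᴴ := by
    intro j
    calc (Y j * S * (Y j)ᴴ) * (Y j * S * (Y j)ᴴ)ᴴ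
        = Y j * S * ((Y j)ᴴ * Y j) * Sᴴ * (Y j)ᴴ := by
          simp only [conjTranspose_mul, conjTranspose_conjTranspose, Matrix.mul_assoc]
      _ = Y j * (S * Sᴴ) * (Y j)ᴴ := by
          rw [hY, Matrix.mul_one]; simp only [Matrix.mul_assoc]
      _ = _ := by rw [hS1, Matrix.mul_one]
  have hxx' : ∀ j, (Y j * S * (Y j)ᴴ)ᴴ * (Y j * S * (Y j)ᴴ) = Y j * (Y j)ᴴ := by
    intro j
    calc (Y j * S * (Y j)ᴴ)ᴴ * (Y j * S * (Y j)ᴴ)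
        = Y j * Sᴴ * ((Y j)ᴴ * Y j) * S * (Y j)ᴴ := by
          simp only [conjTranspose_mul, conjTranspose_conjTranspose, Matrix.mul_assoc]
      _ = Y j * (Sᴴ * S) * (Y j)ᴴ := by
          rw [hY, Matrix.mul_one]; simp only [Matrix.mul_assoc]
      _ = _ := by rw [hS2, Matrix.mul_one]
  refine ⟨fun j => Y j * S * (Y j)ᴴ, ?_, ?_, ?_, ?_⟩
  · intro j
    simp only [star_eq_conjTranspose]
    rw [hxx, hxx']
  · intro j
    apply spectrum_of_pow_eq hn0
    rw [conj_pow_aux _ (hY j), pow_succ, hSk, Matrix.one_mul]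
  · intro j
    rw [star_eq_conjTranspose]
    calc u * (Y j * S * (Y j)ᴴ) * uᴴ = (u * Y j) * S * (u * Y j)ᴴ := by
          simp only [conjTranspose_mul, Matrix.mul_assoc]
      _ = Y j * (D * S * Dᴴ) * (Y j)ᴴ := by
          rw [huY]; simp only [conjTranspose_mul, Matrix.mul_assoc]
      _ = _ := by rw [hDS, Matrix.mul_smul, Matrix.smul_mul]
  · simp only [star_eq_conjTranspose, hxx]
    rw [← Matrix.mulVec_injective_iff_isUnit]
    rw [← Matrix.coe_mulVecLin, ← LinearMap.ker_eq_bot, LinearMap.ker_eq_bot']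
    intro v hv
    rw [mulVecLin_apply, Matrix.sum_mulVec] at hv
    have h1 : ∑ j, star ((Y j)ᴴ *ᵥ v) ⬝ᵥ ((Y j)ᴴ *ᵥ v) = 0 := by
      have h2 := congrArg (fun w => star v ⬝ᵥ w) hv
      simp only [dotProduct_zero, dotProduct_sum] at h2
      rw [← h2]
      refine Finset.sum_congr rfl fun j _ => ?_
      rw [star_mulVec, conjTranspose_conjTranspose, ← dotProduct_mulVec, mulVec_mulVec]
    have h4 : Uᴴ *ᵥ v = 0 := by
      ext p
      obtain ⟨j, q, hq⟩ := blockEmb_cover m M hm0 d hm hM p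
      have h5 := sum_dotProduct_aux _ h1 j
      have h6 := congrFun h5 q
      rw [← hq]
      exact h6
    calc v = (U * Uᴴ) *ᵥ v := by rw [hU', one_mulVec]
      _ = 0 := by rw [← mulVec_mulVec, h4, mulVec_zero]
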